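/- (Strong duality.) Let y_0 be a nondominated point of (P(0)) and assume the Slater condition. Then there exists Δ_0 ∈ Γ_{y_0} ⊆ P(Z,Y) such that y_0 ∈ Φ(Δ_0), where Ψ(Δ) := ∪_{x∈Ω}(F(x)+Δ(G(x)+Z_+)) and Φ(Δ) := {y ∈ cl(Ψ(Δ)) : Ψ(Δ) ∩ (y−Y_+) ⊆ y+Y_+}; that is, y_0 is a nondominated point of the Lagrangian program (P[Δ_0]). -/

import Mathlib

open Pointwise Filter Topology

namespace Paper

section Defs

variable {E : Type*} [NormedAddCommGroup E] [NormedSpace ℝ E]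

/-- The cone hull of a set: all nonnegative multiples of its elements. -/
def coneHull (A : Set E) : Set E := {x | ∃ r : ℝ, 0 ≤ r ∧ ∃ a ∈ A, x = r • a}

/-- A cone: a nonempty set closed under multiplication by nonnegative scalars. -/
def IsCone (K : Set E) : Prop := K.Nonempty ∧ ∀ r : ℝ, 0 ≤ r → ∀ x ∈ K, r • x ∈ K

/-- A pointed cone: `K ∩ (-K) = {0}`. -/
def IsPointed (K : Set E) : Prop := K ∩ (-K) = {0}

/-- A proper cone: `{0} ≠ K ≠ E`. -/
def IsProper (K : Set E) : Prop := K ≠ {0} ∧ K ≠ Set.univ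

/-- A solid cone: nonempty interior. -/
def IsSolid (K : Set E) : Prop := (interior K).Nonempty

/-- The contingent cone to `A` at `w`. -/
def contingentCone (A : Set E) (w : E) : Set E :=
  {v | Filter.liminf (fun h : ℝ => Metric.infDist (w + h • v) A / h) (𝓝[>] (0:ℝ)) = 0}

end Defs

section SV

variable {X Y Z : Type*}
  [NormedAddCommGroup X] [NormedSpace ℝ X]
  [NormedAddCommGroup Y] [NormedSpace ℝ Y]
  [NormedAddCommGroup Z] [NormedSpace ℝ Z]

/-- The graph of a set-valued map. -/
def graph (Δ : Z → Set Y) : Set (Z × Y) := {p | p.2 ∈ Δ p.1}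

/-- The image of a set by a set-valued map. -/
def imageSet (Δ : Z → Set Y) (A : Set Z) : Set Y := ⋃ w ∈ A, Δ w

/-- The feasible set map `S(z) = {x ∈ Ω : G(x) ∩ (z - Z₊) ≠ ∅}`. -/
def Smap (Ω : Set X) (G : X → Set Z) (Zp : Set Z) (z : Z) : Set X :=
  {x | x ∈ Ω ∧ (G x ∩ ({z} - Zp)).Nonempty}

/-- The value map `V(z) = F(S(z))`. -/
def Vmap (Ω : Set X) (F : X → Set Y) (G : X → Set Z) (Zp : Set Z) (z : Z) : Set Y :=
  ⋃ x ∈ Smap Ω G Zp z, F x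

/-- The map `(V + Y₊)(z) = V(z) + Y₊`. -/
def VplusMap (Ω : Set X) (F : X → Set Y) (G : X → Set Z) (Zp : Set Z) (Yp : Set Y)
    (z : Z) : Set Y :=
  Vmap Ω F G Zp z + Yp

/-- The graph of `V + Y₊`. -/
def GraphVplus (Ω : Set X) (F : X → Set Y) (G : X → Set Z) (Zp : Set Z) (Yp : Set Y) :
    Set (Z × Y) :=
  {p : Z × Y | p.2 ∈ Vmap Ω F G Zp p.1 + Yp}

/-- Minimal points of a set `A` with respect to the cone `Yp`. -/
def MinSet (Yp : Set Y) (A : Set Y) : Set Y :=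
  {a ∈ A | A ∩ ({a} - Yp) ⊆ {a} + Yp}

/-- The marginal map `M(z) = Min(V(z))`. -/
def Mmap (Ω : Set X) (F : X → Set Y) (G : X → Set Z) (Zp : Set Z) (Yp : Set Y)
    (z : Z) : Set Y :=
  MinSet Yp (Vmap Ω F G Zp z)

/-- `y₀` is a nondominated point of `(P(0))`. -/
def Nondominated (Ω : Set X) (F : X → Set Y) (G : X → Set Z) (Zp : Set Z) (Yp : Set Y)
    (y0 : Y) : Prop :=
  y0 ∈ closure (Vmap Ω F G Zp 0) ∧
    Vmap Ω F G Zp 0 ∩ ({y0} - Yp) ⊆ {y0} + Yp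

/-- `y₀` is a minimal point of `(P(0))`. -/
def MinimalPoint (Ω : Set X) (F : X → Set Y) (G : X → Set Z) (Zp : Set Z) (Yp : Set Y)
    (y0 : Y) : Prop :=
  y0 ∈ Vmap Ω F G Zp 0 ∧
    Vmap Ω F G Zp 0 ∩ ({y0} - Yp) ⊆ {y0} + Yp

/-- The set `S_{Y₊}(y₀)` of separating pairs of continuous linear functionals. -/
def Sdual (Ω : Set X) (F : X → Set Y) (G : X → Set Z) (Zp : Set Z) (Yp : Set Y) (y0 : Y) :
    Set ((Z →L[ℝ] ℝ) × (Y →L[ℝ] ℝ)) :=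
  {p | (∀ z' ∈ -Zp, ∀ y' ∈ ({y0} : Set Y) - Yp, p.1 z' + p.2 y' ≤ p.2 y0) ∧
       (∀ q ∈ GraphVplus Ω F G Zp Yp, p.2 y0 ≤ p.1 q.1 + p.2 q.2)}

/-- `P(Z,Y)`: closed convex processes with full domain. -/
def PZY : Set (Z → Set Y) :=
  {Δ | IsClosed (graph Δ) ∧ Convex ℝ (graph Δ) ∧ IsCone (graph Δ) ∧ ∀ z, (Δ z).Nonempty}

/-- The set `Λ_{(z*,y*)}` of processes associated to `(z*,y*)`. -/
def Lambda (zs : Z →L[ℝ] ℝ) (ys : Y →L[ℝ] ℝ) : Set (Z → Set Y) :=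
  {Δ | Δ ∈ PZY ∧ graph Δ \ {0} ⊆ {p : Z × Y | 0 < -(zs p.1) + ys p.2}}

/-- The set `Γ_{y₀}` of processes associated to `y₀`. -/
def Gamma (Ω : Set X) (F : X → Set Y) (G : X → Set Z) (Zp : Set Z) (Yp : Set Y) (y0 : Y) :
    Set (Z → Set Y) :=
  ⋃ p ∈ Sdual Ω F G Zp Yp y0 \ {0}, Lambda p.1 p.2

/-- The Slater constraint qualification. -/
def Slater (Ω : Set X) (F : X → Set Y) (G : X → Set Z) (Zp : Set Z) : Prop :=
  ∃ x1 ∈ Ω, (F x1).Nonempty ∧ (G x1 ∩ (-interior Zp)).Nonempty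

/-- `Ψ(Δ) = ∪_{x∈Ω}(F(x) + Δ(G(x)+Z₊))`. -/
def Umap (Ω : Set X) (F : X → Set Y) (G : X → Set Z) (Zp : Set Z) (Δ : Z → Set Y) : Set Y :=
  ⋃ x ∈ Ω, (F x + imageSet Δ (G x + Zp))

/-- The dual map `Φ(Δ)`: nondominated points of the closure of `Ψ(Δ)`. -/
def Phi (Ω : Set X) (F : X → Set Y) (G : X → Set Z) (Zp : Set Z) (Yp : Set Y)
    (Δ : Z → Set Y) : Set Y :=
  {y ∈ closure (Umap Ω F G Zp Δ) | Umap Ω F G Zp Δ ∩ ({y} - Yp) ⊆ {y} + Yp}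

/-- `Δ` is a Lagrange multiplier of `(P(0))` at `y₀`. -/
def LagrangeMultiplier (Ω : Set X) (F : X → Set Y) (G : X → Set Z) (Zp : Set Z) (Yp : Set Y)
    (Δ : Z → Set Y) (y0 : Y) : Prop :=
  y0 ∈ closure (Umap Ω F G Zp Δ) ∧ Umap Ω F G Zp Δ ∩ ({y0} - Yp) ⊆ {y0} + Yp

/-- The graph of the Lagrange process of `(P(0))` at `y₀`. -/
def GraphLagrange (Ω : Set X) (F : X → Set Y) (G : X → Set Z) (Zp : Set Z) (Yp : Set Y)
    (y0 : Y) : Set (Z × Y) :=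
  {p : Z × Y | ∀ q ∈ Sdual Ω F G Zp Yp y0, q.1 p.1 ≤ q.2 p.2}

/-- The Lagrange process of `(P(0))` at `y₀`, as a set-valued map. -/
def Lagrange (Ω : Set X) (F : X → Set Y) (G : X → Set Z) (Zp : Set Z) (Yp : Set Y) (y0 : Y)
    (z : Z) : Set Y :=
  {y | (z, y) ∈ GraphLagrange Ω F G Zp Yp y0}

/-- The contingent derivative of a set-valued map `H` at `(z₀, y₀)`. -/
def contingentDeriv (H : Z → Set Y) (z0 : Z) (y0 : Y) (z : Z) : Set Y :=
  {y | (z, y) ∈ contingentCone (graph H) (z0, y0)}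

/-- The S-derivative (Shi derivative) of a set-valued map `H` at `(z₀, y₀)`. -/
def Sderiv (H : Z → Set Y) (z0 : Z) (y0 : Y) (z : Z) : Set Y :=
  {y | ∃ (h : ℕ → ℝ) (zn : ℕ → Z) (yn : ℕ → Y),
    (∀ n, 0 < h n) ∧ Filter.Tendsto zn Filter.atTop (𝓝 z) ∧
    Filter.Tendsto yn Filter.atTop (𝓝 y) ∧
    Filter.Tendsto (fun n => h n • zn n) Filter.atTop (𝓝 (0:Z)) ∧
    ∀ n, y0 + h n • yn n ∈ H (z0 + h n • zn n)}

/-- The standing assumptions of the paper: `Y₊`, `Z₊` proper solid convex cones, `Ω` nonempty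
convex, `F` is `Y₊`-convex and `G` is `Z₊`-convex. -/
def StandingHyp (Ω : Set X) (F : X → Set Y) (G : X → Set Z) (Zp : Set Z) (Yp : Set Y) : Prop :=
  IsCone Yp ∧ IsProper Yp ∧ IsSolid Yp ∧ Convex ℝ Yp ∧
  IsCone Zp ∧ IsProper Zp ∧ IsSolid Zp ∧ Convex ℝ Zp ∧
  Ω.Nonempty ∧ Convex ℝ Ω ∧
  Convex ℝ {p : X × Y | p.1 ∈ Ω ∧ p.2 ∈ F p.1 + Yp} ∧
  Convex ℝ {p : X × Z | p.1 ∈ Ω ∧ p.2 ∈ G p.1 + Zp}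

end SV

variable {X Y Z : Type*}
  [NormedAddCommGroup X] [NormedSpace ℝ X]
  [NormedAddCommGroup Y] [NormedSpace ℝ Y]
  [NormedAddCommGroup Z] [NormedSpace ℝ Z]

/-! Separate the convex set `Graph(V + Y₊)` from `(0, y₀) - int (Z₊ × Y₊)`, which it misses because
`y₀` is nondominated. The separating functional `(z*, y*)` lies in `S_{Y₊}(y₀)`, and the Slater
point rules out `y* = 0`. The Bishop–Phelps cone `{p | c ‖p‖ ≤ -z* p.1 + y* p.2}` with small `c > 0`
is therefore the graph of a process with full domain, so `Γ_{y₀}` is nonempty. Finally, every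
`Δ ∈ Γ_{y₀}` is a multiplier: if `w = v + d ∈ y₀ - Y₊` with `v ∈ V(z)` and `d ∈ Δ(z)`, the
inequalities defining `S_{Y₊}(y₀)` give `-z* z + y* d ≤ 0`, hence `(z, d) = 0`, and `w ∈ V(0)`. -/

section Translate

variable {E : Type*} [AddCommGroup E] {A K : Set E} {x y : E}

theorem mem_singleton_sub_iff : y ∈ {x} - K ↔ x - y ∈ K :=
  ⟨by rintro ⟨_, rfl, k, hk, rfl⟩; simpa using hk, fun h => ⟨x, rfl, _, h, sub_sub_cancel _ _⟩⟩

theorem inter_singleton_sub_subset_singleton_add_iff :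
    A ∩ ({x} - K) ⊆ {x} + K ↔ ∀ a ∈ A, x - a ∈ K → a - x ∈ K := by
  have hadd (a : E) : a ∈ {x} + K ↔ a - x ∈ K := by simp [neg_add_eq_sub]
  simp only [Set.subset_def, Set.mem_inter_iff, and_imp, mem_singleton_sub_iff, hadd]

end Translate

section Cone

variable {E : Type*} [NormedAddCommGroup E] [NormedSpace ℝ E] {K : Set E}

theorem IsCone.zero_mem (hK : IsCone K) : (0 : E) ∈ K := by
  obtain ⟨x, hx⟩ := hK.1
  simpa using hK.2 0 le_rfl x hx

theorem IsCone.add_mem (hK : IsCone K) (hconv : Convex ℝ K) {x y : E} (hx : x ∈ K) (hy : y ∈ K) :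
    x + y ∈ K := by
  have hmid : (2 : ℝ) • midpoint ℝ x y ∈ K := hK.2 2 zero_le_two _ (hconv.midpoint_mem hx hy)
  rwa [two_smul, midpoint_add_self] at hmid

theorem IsCone.add_mem_interior (hK : IsCone K) (hconv : Convex ℝ K) {x y : E} (hx : x ∈ K)
    (hy : y ∈ interior K) : x + y ∈ interior K := by
  have hadd : K + K ⊆ K := Set.add_subset_iff.2 fun _ ha _ hb => hK.add_mem hconv ha hb
  exact interior_mono hadd (subset_interior_add_right (Set.add_mem_add hx hy))

theorem IsCone.zero_notMem_interior (hK : IsCone K) (hne : K ≠ Set.univ) :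
    (0 : E) ∉ interior K := by
  refine fun h0 => hne (Set.eq_univ_of_forall fun x => ?_)
  have habs : Absorbs ℝ K {x} := absorbent_nhds_zero (mem_interior_iff_mem_nhds.1 h0) x
  obtain ⟨c, hxc, hc⟩ :=
    ((habs.filter_mono IsOrderBornology.atTop_le_cobounded).and (eventually_ge_atTop 0)).exists
  obtain ⟨k, hk, rfl⟩ := hxc rfl
  exact hK.2 c hc k hk

theorem IsCone.neg_notMem_interior (hK : IsCone K) (hconv : Convex ℝ K) (hne : K ≠ Set.univ)
    {x : E} (hx : x ∈ K) : -x ∉ interior K := fun hneg =>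
  hK.zero_notMem_interior hne (add_neg_cancel x ▸ hK.add_mem_interior hconv hx hneg)

end Cone

section Separation

variable {E : Type*} [TopologicalSpace E] [AddCommGroup E] [IsTopologicalAddGroup E] [Module ℝ E]
  [ContinuousSMul ℝ E]

theorem pos_of_mem_interior_of_forall_nonneg {K : Set E} {f : E →L[ℝ] ℝ} (hf : f ≠ 0)
    (hK : ∀ x ∈ K, 0 ≤ f x) {x : E} (hx : x ∈ interior K) : 0 < f x := by
  have hopen : IsOpen (f '' interior K) := f.isOpenMap_of_ne_zero hf _ isOpen_interior
  have hsub : f '' interior K ⊆ Set.Ici 0 := Set.image_subset_iff.2 fun y hy =>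
    hK y (interior_subset hy)
  have hmem : f x ∈ interior (Set.Ici 0) :=
    interior_maximal hsub hopen (Set.mem_image_of_mem f hx)
  rwa [interior_Ici] at hmem

theorem exists_supporting_functional_of_sub_notMem_interior {A K : Set E} {w : E}
    (hA : Convex ℝ A) (hK : Convex ℝ K) (hKint : (interior K).Nonempty) (h0 : 0 ∈ K)
    (hw : w ∈ closure A) (hdisj : ∀ a ∈ A, w - a ∉ interior K) :
    ∃ f : E →L[ℝ] ℝ, f ≠ 0 ∧ (∀ k ∈ K, 0 ≤ f k) ∧ ∀ a ∈ A, f w ≤ f a := by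
  have hdisj' : Disjoint (interior K) ({w} - A) := by
    simpa [Set.disjoint_right, Set.singleton_sub] using hdisj
  obtain ⟨f, u, hf, hfK, hfA⟩ := geometric_hahn_banach_of_nonempty_interior hK
    ((convex_singleton w).sub hA) hdisj' hKint
    ((Set.singleton_nonempty w).sub (closure_nonempty_iff.1 ⟨w, hw⟩))
  replace hfA : ∀ a ∈ A, u ≤ f w - f a := by simpa [Set.singleton_sub] using hfA
  have hu_nonneg : 0 ≤ u := by simpa using hfK 0 h0
  have hu_nonpos : u ≤ 0 := by
    have hclosed : IsClosed {a | u ≤ f w - f a} := isClosed_le (by fun_prop) (by fun_prop)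
    have hwmem : u ≤ f w - f w := closure_minimal hfA hclosed hw
    rwa [sub_self] at hwmem
  refine ⟨-f, neg_ne_zero.2 hf, fun k hk => ?_, fun a ha => ?_⟩
  · simpa using (hfK k hk).trans hu_nonpos
  · simpa using hu_nonneg.trans (hfA a ha)

end Separation

section BishopPhelps

variable {E : Type*} [NormedAddCommGroup E] [NormedSpace ℝ E] {f : E →L[ℝ] ℝ} {c : ℝ}

/-- The Bishop–Phelps cone of the functional `f` with aperture `c`. For `c > 0` it is a closed
convex cone on which `f` is positive away from the origin; on a product space it is taken as the
graph of the multiplier process. -/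
def bishopPhelpsCone (f : E →L[ℝ] ℝ) (c : ℝ) : Set E := {x | c * ‖x‖ ≤ f x}

theorem isClosed_bishopPhelpsCone : IsClosed (bishopPhelpsCone f c) :=
  isClosed_le (by fun_prop) (by fun_prop)

theorem isCone_bishopPhelpsCone : IsCone (bishopPhelpsCone f c) := by
  refine ⟨⟨0, by simp [bishopPhelpsCone]⟩, fun r hr x hx => ?_⟩
  calc c * ‖r • x‖ = r * (c * ‖x‖) := by rw [norm_smul, Real.norm_of_nonneg hr]; ring
    _ ≤ r * f x := mul_le_mul_of_nonneg_left hx hr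
    _ = f (r • x) := by rw [map_smul, smul_eq_mul]

theorem convex_bishopPhelpsCone (hc : 0 ≤ c) : Convex ℝ (bishopPhelpsCone f c) := by
  have hconv : ConvexOn ℝ Set.univ fun x : E => c * ‖x‖ - f x :=
    (convexOn_univ_norm.smul hc).sub (f.toLinearMap.concaveOn convex_univ)
  simpa [bishopPhelpsCone] using hconv.convex_le 0

theorem pos_of_mem_bishopPhelpsCone (hc : 0 < c) {x : E} (hx : x ∈ bishopPhelpsCone f c)
    (hx0 : x ≠ 0) : 0 < f x :=
  (mul_pos hc (norm_pos_iff.2 hx0)).trans_le hx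

theorem exists_add_smul_mem_bishopPhelpsCone (hc : 0 ≤ c) {w : E} (hw : c * ‖w‖ < f w) (x : E) :
    ∃ t : ℝ, x + t • w ∈ bishopPhelpsCone f c := by
  have hgap : 0 < f w - c * ‖w‖ := sub_pos.2 hw
  obtain ⟨t, ht, htx⟩ : ∃ t : ℝ, 0 ≤ t ∧ c * ‖x‖ - f x ≤ t * (f w - c * ‖w‖) :=
    ⟨|c * ‖x‖ - f x| / (f w - c * ‖w‖), by positivity, by
      rw [div_mul_cancel₀ _ hgap.ne']; exact le_abs_self _⟩
  refine ⟨t, ?_⟩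
  calc c * ‖x + t • w‖ ≤ c * (‖x‖ + t * ‖w‖) := by
        gcongr
        simpa [norm_smul, Real.norm_of_nonneg ht] using norm_add_le x (t • w)
    _ ≤ f x + t * f w := by linarith
    _ = f (x + t • w) := by rw [map_add, map_smul, smul_eq_mul]

end BishopPhelps

theorem Lambda_nonempty (zs : Z →L[ℝ] ℝ) {ys : Y →L[ℝ] ℝ} (hys : ys ≠ 0) :
    (Lambda zs ys).Nonempty := by
  obtain ⟨w, hw⟩ : ∃ w, ys w = 1 :=
    LinearMap.surjective (fun h => hys (ContinuousLinearMap.coe_injective h)) 1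
  let f : Z × Y →L[ℝ] ℝ := (-zs).coprod ys
  let c : ℝ := (‖w‖ + 1)⁻¹
  have hc : 0 < c := by positivity
  have hcw : c * ‖((0 : Z), w)‖ < f (0, w) := by
    have hlt : ‖w‖ / (‖w‖ + 1) < 1 := (div_lt_one (by positivity)).2 (lt_add_one _)
    simpa [f, c, hw, inv_mul_eq_div] using hlt
  refine ⟨fun z => {y | (z, y) ∈ bishopPhelpsCone f c}, ⟨isClosed_bishopPhelpsCone,
    convex_bishopPhelpsCone hc.le, isCone_bishopPhelpsCone, fun z => ?_⟩, fun p hp => ?_⟩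
  · obtain ⟨t, ht⟩ := exists_add_smul_mem_bishopPhelpsCone hc.le hcw (z, 0)
    exact ⟨t • w, by simpa using ht⟩
  · simpa [f] using pos_of_mem_bishopPhelpsCone hc hp.1 hp.2

section ValueMap

variable {α Y Z : Type*} [NormedAddCommGroup Z] {Ω : Set α} {F : α → Set Y} {G : α → Set Z}
  {Zp : Set Z} {Yp : Set Y}

theorem mem_Smap {z : Z} {x : α} : x ∈ Smap Ω G Zp z ↔ x ∈ Ω ∧ z ∈ G x + Zp := by
  refine and_congr_right fun _ => ⟨?_, ?_⟩
  · rintro ⟨g, hg, hgz⟩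
    exact ⟨g, hg, z - g, mem_singleton_sub_iff.1 hgz, add_sub_cancel g z⟩
  · rintro ⟨g, hg, k, hk, rfl⟩
    exact ⟨g, hg, mem_singleton_sub_iff.2 (by simpa using hk)⟩

theorem mem_Vmap {z : Z} {y : Y} : y ∈ Vmap Ω F G Zp z ↔ ∃ x ∈ Ω, z ∈ G x + Zp ∧ y ∈ F x := by
  simp only [Vmap, Set.mem_iUnion, mem_Smap, exists_prop, and_assoc]

theorem Vmap_subset_Vmap_add [NormedSpace ℝ Z] (hZ : IsCone Zp) (hZconv : Convex ℝ Zp) (z : Z)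
    {k : Z} (hk : k ∈ Zp) : Vmap Ω F G Zp z ⊆ Vmap Ω F G Zp (z + k) := by
  intro y hy
  obtain ⟨x, hx, ⟨g, hg, k', hk', rfl⟩, hyx⟩ := mem_Vmap.1 hy
  exact mem_Vmap.2 ⟨x, hx, ⟨g, hg, k' + k, hZ.add_mem hZconv hk' hk, (add_assoc g k' k).symm⟩, hyx⟩

variable [NormedAddCommGroup Y]

theorem mem_Umap {Δ : Z → Set Y} {w : Y} :
    w ∈ Umap Ω F G Zp Δ ↔ ∃ z, w ∈ Vmap Ω F G Zp z + Δ z := by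
  simp only [Umap, imageSet, Set.mem_iUnion, exists_prop]
  constructor
  · rintro ⟨x, hx, v, hvx, d, hd, hvd⟩
    obtain ⟨z, hz, hdz⟩ := by simpa only [Set.mem_iUnion, exists_prop] using hd
    exact ⟨z, v, mem_Vmap.2 ⟨x, hx, hz, hvx⟩, d, hdz, hvd⟩
  · rintro ⟨z, v, hv, d, hdz, hvd⟩
    obtain ⟨x, hx, hz, hvx⟩ := mem_Vmap.1 hv
    exact ⟨x, hx, v, hvx, d, by simpa only [Set.mem_iUnion, exists_prop] using ⟨z, hz, hdz⟩, hvd⟩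

theorem mem_GraphVplus {p : Z × Y} :
    p ∈ GraphVplus Ω F G Zp Yp ↔ ∃ x ∈ Ω, p.1 ∈ G x + Zp ∧ p.2 ∈ F x + Yp := by
  constructor
  · rintro ⟨v, hv, k, hk, hvk⟩
    obtain ⟨x, hx, hz, hvx⟩ := mem_Vmap.1 hv
    exact ⟨x, hx, hz, v, hvx, k, hk, hvk⟩
  · rintro ⟨x, hx, hz, v, hvx, k, hk, hvk⟩
    exact ⟨v, mem_Vmap.2 ⟨x, hx, hz, hvx⟩, k, hk, hvk⟩

theorem mk_mem_GraphVplus (hY0 : 0 ∈ Yp) {z : Z} {y : Y} (hy : y ∈ Vmap Ω F G Zp z) :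
    (z, y) ∈ GraphVplus Ω F G Zp Yp :=
  ⟨y, hy, 0, hY0, add_zero y⟩

theorem convex_GraphVplus [NormedSpace ℝ Y] [NormedSpace ℝ Z] [AddCommMonoid α] [SMul ℝ α]
    (hF : Convex ℝ {p : α × Y | p.1 ∈ Ω ∧ p.2 ∈ F p.1 + Yp})
    (hG : Convex ℝ {p : α × Z | p.1 ∈ Ω ∧ p.2 ∈ G p.1 + Zp}) :
    Convex ℝ (GraphVplus Ω F G Zp Yp) := by
  rintro ⟨z, y⟩ hp ⟨z', y'⟩ hp' a b ha hb hab
  obtain ⟨x, hx, hz, hy⟩ := mem_GraphVplus.1 hp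
  obtain ⟨x', hx', hz', hy'⟩ := mem_GraphVplus.1 hp'
  obtain ⟨hxx', hyy'⟩ := hF (x := (x, y)) ⟨hx, hy⟩ (y := (x', y')) ⟨hx', hy'⟩ ha hb hab
  obtain ⟨-, hzz'⟩ := hG (x := (x, z)) ⟨hx, hz⟩ (y := (x', z')) ⟨hx', hz'⟩ ha hb hab
  exact mem_GraphVplus.2 ⟨a • x + b • x', hxx', hzz', hyy'⟩

end ValueMap

section Duality

variable {α : Type*} {Ω : Set α} {F : α → Set Y} {G : α → Set Z} {Zp : Set Z} {Yp : Set Y} {y0 : Y}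

theorem Nondominated.sub_notMem_interior (hy0 : Nondominated Ω F G Zp Yp y0) (hZ : IsCone Zp)
    (hZconv : Convex ℝ Zp) (hY : IsCone Yp) (hYconv : Convex ℝ Yp) (hYne : Yp ≠ Set.univ)
    {p : Z × Y} (hp : p ∈ GraphVplus Ω F G Zp Yp) : (0, y0) - p ∉ interior (Zp ×ˢ Yp) := by
  obtain ⟨z, y⟩ := p
  obtain ⟨v, hv, k, hk, rfl : v + k = y⟩ := hp
  rw [interior_prod_eq]
  rintro ⟨hz, hy⟩
  have hv0 : v ∈ Vmap Ω F G Zp 0 := by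
    simpa using Vmap_subset_Vmap_add hZ hZconv z (interior_subset hz) hv
  have hvint : y0 - v ∈ interior Yp := by
    have hadd : k + (y0 - (v + k)) ∈ interior Yp := hY.add_mem_interior hYconv hk hy
    rwa [show k + (y0 - (v + k)) = y0 - v by abel] at hadd
  have hvmem : v - y0 ∈ Yp :=
    inter_singleton_sub_subset_singleton_add_iff.1 hy0.2 v hv0 (interior_subset hvint)
  exact hY.neg_notMem_interior hYconv hYne hvmem (by rwa [neg_sub])

theorem mem_Sdual_iff {p : (Z →L[ℝ] ℝ) × (Y →L[ℝ] ℝ)} :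
    p ∈ Sdual Ω F G Zp Yp y0 ↔ (∀ q ∈ Zp ×ˢ Yp, 0 ≤ p.1.coprod p.2 q) ∧
      ∀ q ∈ GraphVplus Ω F G Zp Yp, p.1.coprod p.2 (0, y0) ≤ p.1.coprod p.2 q := by
  refine and_congr ⟨fun h q hq => ?_, fun h z hz y hy => ?_⟩ (by simp)
  · have hle := h (-q.1) (by simpa using hq.1) (y0 - q.2) ⟨y0, rfl, q.2, hq.2, rfl⟩
    simp only [map_neg, map_sub] at hle
    simp only [ContinuousLinearMap.coprod_apply]
    linarith
  · have hnonneg := h (-z, y0 - y) ⟨hz, mem_singleton_sub_iff.1 hy⟩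
    simp only [ContinuousLinearMap.coprod_apply, map_neg, map_sub] at hnonneg
    linarith

theorem Nondominated.exists_ne_zero_mem_Sdual (hy0 : Nondominated Ω F G Zp Yp y0) (hZ : IsCone Zp)
    (hZconv : Convex ℝ Zp) (hZsolid : IsSolid Zp) (hY : IsCone Yp) (hYconv : Convex ℝ Yp)
    (hYsolid : IsSolid Yp) (hYne : Yp ≠ Set.univ) (hV : Convex ℝ (GraphVplus Ω F G Zp Yp)) :
    ∃ p ∈ Sdual Ω F G Zp Yp y0, p ≠ 0 := by
  have hcl : ((0 : Z), y0) ∈ closure (GraphVplus Ω F G Zp Yp) :=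
    map_mem_closure (by fun_prop) hy0.1 fun _ => mk_mem_GraphVplus hY.zero_mem
  have hsolid : (interior (Zp ×ˢ Yp)).Nonempty := by
    rw [interior_prod_eq]
    exact hZsolid.prod hYsolid
  obtain ⟨f, hf, hfK, hfV⟩ := exists_supporting_functional_of_sub_notMem_interior hV
    (hZconv.prod hYconv) hsolid ⟨hZ.zero_mem, hY.zero_mem⟩ hcl
    fun _ => hy0.sub_notMem_interior hZ hZconv hY hYconv hYne
  let p := (f.comp (.inl ℝ Z Y), f.comp (.inr ℝ Z Y))
  have hpf : p.1.coprod p.2 = f := f.coprod_comp_inl_inr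
  refine ⟨p, mem_Sdual_iff.2 (by rw [hpf]; exact ⟨hfK, hfV⟩), fun hp => hf ?_⟩
  rw [← hpf, hp]
  ext <;> simp

theorem Slater.snd_ne_zero_of_mem_Sdual (hSl : Slater Ω F G Zp) (hZ0 : 0 ∈ Zp) (hY0 : 0 ∈ Yp)
    {p : (Z →L[ℝ] ℝ) × (Y →L[ℝ] ℝ)} (hp : p ∈ Sdual Ω F G Zp Yp y0) (hp0 : p ≠ 0) :
    p.2 ≠ 0 := by
  intro hp2
  obtain ⟨hcone, hgraph⟩ := mem_Sdual_iff.1 hp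
  obtain ⟨x, hx, ⟨y, hy⟩, g, hg, hgint⟩ := hSl
  have hp1 : p.1 ≠ 0 := fun hp1 => hp0 (Prod.ext hp1 hp2)
  have hp1nonneg : ∀ z ∈ Zp, 0 ≤ p.1 z := fun z hz => by
    simpa using hcone (z, 0) ⟨hz, hY0⟩
  have hneg : 0 < p.1 (-g) := pos_of_mem_interior_of_forall_nonneg hp1 hp1nonneg hgint
  have hyV : y ∈ Vmap Ω F G Zp g := mem_Vmap.2 ⟨x, hx, ⟨g, hg, 0, hZ0, add_zero g⟩, hy⟩
  have hpos : 0 ≤ p.1 g := by simpa [hp2] using hgraph (g, y) (mk_mem_GraphVplus hY0 hyV)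
  rw [map_neg] at hneg
  linarith

theorem mem_Gamma {Δ : Z → Set Y} :
    Δ ∈ Gamma Ω F G Zp Yp y0 ↔ ∃ p ∈ Sdual Ω F G Zp Yp y0, p ≠ 0 ∧ Δ ∈ Lambda p.1 p.2 := by
  simp [Gamma, and_assoc]

theorem eq_zero_of_mem_Lambda {zs : Z →L[ℝ] ℝ} {ys : Y →L[ℝ] ℝ} {Δ : Z → Set Y}
    (hΔ : Δ ∈ Lambda zs ys) {z : Z} {d : Y} (hd : d ∈ Δ z) (hle : ys d ≤ zs z) :
    z = 0 ∧ d = 0 := by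
  by_contra hne
  have hpos : 0 < -zs z + ys d := hΔ.2 ⟨hd, fun h => hne (Prod.mk_eq_zero.1 h)⟩
  linarith

theorem Nondominated.mem_Phi_of_mem_Gamma (hy0 : Nondominated Ω F G Zp Yp y0) (hZ0 : 0 ∈ Zp)
    (hY0 : 0 ∈ Yp) {Δ : Z → Set Y} (hΔ : Δ ∈ Gamma Ω F G Zp Yp y0) :
    y0 ∈ Phi Ω F G Zp Yp Δ := by
  obtain ⟨p, hp, -, hΔp⟩ := mem_Gamma.1 hΔ
  obtain ⟨hcone, hgraph⟩ := mem_Sdual_iff.1 hp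
  have hnd := inter_singleton_sub_subset_singleton_add_iff.1 hy0.2
  refine ⟨closure_mono (fun v hv => ?_) hy0.1,
    inter_singleton_sub_subset_singleton_add_iff.2 fun w hw hwy0 => ?_⟩
  · have h0 : (0 : Y) ∈ Δ 0 := hΔp.1.2.2.1.zero_mem
    exact mem_Umap.2 ⟨0, v, hv, 0, h0, add_zero v⟩
  · obtain ⟨z, v, hv, d, hd, rfl : v + d = w⟩ := mem_Umap.1 hw
    have hvd : p.2 v + p.2 d ≤ p.2 y0 := by
      simpa using hcone (0, y0 - (v + d)) ⟨hZ0, hwy0⟩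
    have hy0v : p.2 y0 ≤ p.1 z + p.2 v := by simpa using hgraph (z, v) (mk_mem_GraphVplus hY0 hv)
    obtain ⟨rfl, rfl⟩ := eq_zero_of_mem_Lambda hΔp hd (by linarith)
    rw [add_zero] at hwy0 ⊢
    exact hnd v hv hwy0

end Duality

theorem stmt_12_general {α : Type*} {Ω : Set α} {F : α → Set Y} {G : α → Set Z} {Zp : Set Z}
    {Yp : Set Y} (hZ : IsCone Zp) (hZconv : Convex ℝ Zp) (hY : IsCone Yp) (hYconv : Convex ℝ Yp)
    (hYsolid : IsSolid Yp) (hYne : Yp ≠ Set.univ) (hV : Convex ℝ (GraphVplus Ω F G Zp Yp))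
    {y0 : Y} (hy0 : Nondominated Ω F G Zp Yp y0) (hSl : Slater Ω F G Zp) :
    ∃ Δ0 ∈ Gamma Ω F G Zp Yp y0, y0 ∈ Phi Ω F G Zp Yp Δ0 := by
  have hZsolid : IsSolid Zp := by
    obtain ⟨_, _, _, g, _, hg⟩ := hSl
    exact ⟨-g, hg⟩
  obtain ⟨p, hp, hp0⟩ :=
    hy0.exists_ne_zero_mem_Sdual hZ hZconv hZsolid hY hYconv hYsolid hYne hV
  obtain ⟨Δ, hΔ⟩ := Lambda_nonempty p.1
    (hSl.snd_ne_zero_of_mem_Sdual hZ.zero_mem hY.zero_mem hp hp0)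
  have hΔΓ : Δ ∈ Gamma Ω F G Zp Yp y0 := mem_Gamma.2 ⟨p, hp, hp0, hΔ⟩
  exact ⟨Δ, hΔΓ, hy0.mem_Phi_of_mem_Gamma hZ.zero_mem hY.zero_mem hΔΓ⟩

theorem stmt_12 (Ω : Set X) (F : X → Set Y) (G : X → Set Z) (Zp : Set Z) (Yp : Set Y)
    (hSt : StandingHyp Ω F G Zp Yp)
    (y0 : Y) (hy0 : Nondominated Ω F G Zp Yp y0)
    (hSl : Slater Ω F G Zp) :
    ∃ Δ0 ∈ Gamma Ω F G Zp Yp y0, y0 ∈ Phi Ω F G Zp Yp Δ0 := by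
  obtain ⟨hY, ⟨-, hYne⟩, hYsolid, hYconv, hZ, -, -, hZconv, -, -, hF, hG⟩ := hSt
  exact stmt_12_general hZ hZconv hY hYconv hYsolid hYne (convex_GraphVplus hF hG) hy0 hSl

end Paper
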